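/- arXiv:2405.16898 — 7 statements merged into one kernel-verified Lean document; each statement's English description precedes it below -/
import Mathlib

section
/- Let s1, s3 > 0 and s2 ∈ (0,1). At every point p = (x, y, θ, φ, ψ) ∈ ℝ^5, the three covectors Υ¹(p), Υ²(p), Υ³(p) are linearly independent; consequently their common kernel ker Υ¹(p) ∩ ker Υ²(p) ∩ ker Υ³(p) ⊂ ℝ^5 is 2-dimensional at every point. -/
/-!
The covectors are paired with three tangent vectors transverse to their common kernel: `∂φ` is seen
only by `Υ¹`, `∂ψ` only by `Υ³`, and `Υ²` takes the value `1` on `sin θ ∂x − cos θ ∂y`. The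
determinant of this pairing is the constant `−s₁s₃`, so the covectors are independent at every
point, and their common kernel has dimension `5 − 3`.
-/

open Real

/-- `Υ¹ = sin(φ+θ)dx − cos(φ+θ)dy − (s₂cos φ − s₁)dθ + s₁dφ` at `p = (x,y,θ,φ,ψ)`. -/
noncomputable def snakeUps1 (s1 s2 : ℝ) (p : Fin 5 → ℝ) : (Fin 5 → ℝ) →ₗ[ℝ] ℝ :=
  Real.sin (p 3 + p 2) • LinearMap.proj 0 - Real.cos (p 3 + p 2) • LinearMap.proj 1
    - (s2 * Real.cos (p 3) - s1) • LinearMap.proj 2 + s1 • LinearMap.proj 3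

/-- `Υ² = sin θ dx − cos θ dy`. -/
noncomputable def snakeUps2 (p : Fin 5 → ℝ) : (Fin 5 → ℝ) →ₗ[ℝ] ℝ :=
  Real.sin (p 2) • LinearMap.proj 0 - Real.cos (p 2) • LinearMap.proj 1

/-- `Υ³ = sin(ψ+θ)dx − cos(ψ+θ)dy − ((1−s₂)cos ψ − s₃)dθ − s₃dψ`. -/
noncomputable def snakeUps3 (s2 s3 : ℝ) (p : Fin 5 → ℝ) : (Fin 5 → ℝ) →ₗ[ℝ] ℝ :=
  Real.sin (p 4 + p 2) • LinearMap.proj 0 - Real.cos (p 4 + p 2) • LinearMap.proj 1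
    - ((1 - s2) * Real.cos (p 4) - s3) • LinearMap.proj 2 - s3 • LinearMap.proj 4

/-- `ξ₁ = cos θ ∂x + sin θ ∂y + ((s₁²−s₂²)/s₁³) sin φ ∂φ + (((1−s₂)²−s₃²)/s₃³) sin ψ ∂ψ`. -/
noncomputable def snakeXi1 (s1 s2 s3 : ℝ) (p : Fin 5 → ℝ) : Fin 5 → ℝ :=
  ![Real.cos (p 2), Real.sin (p 2), 0,
    (s1 ^ 2 - s2 ^ 2) / s1 ^ 3 * Real.sin (p 3),
    ((1 - s2) ^ 2 - s3 ^ 2) / s3 ^ 3 * Real.sin (p 4)]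

/-- `ξ₂ = −(1/s₁²)(1 − (s₂/s₁)cos φ)∂φ − (1/s₃²)(1 − ((1−s₂)/s₃)cos ψ)∂ψ`. -/
noncomputable def snakeXi2 (s1 s2 s3 : ℝ) (p : Fin 5 → ℝ) : Fin 5 → ℝ :=
  ![0, 0, 0, -(1 / s1 ^ 2 * (1 - s2 / s1 * Real.cos (p 3))),
    -(1 / s3 ^ 2 * (1 - (1 - s2) / s3 * Real.cos (p 4)))]

/-- `ξ₃ = sin θ ∂x − cos θ ∂y − (1/s₁)((s₂/s₁) − cos φ)∂φ + (1/s₃)(((1−s₂)/s₃) − cos ψ)∂ψ`. -/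
noncomputable def snakeXi3 (s1 s2 s3 : ℝ) (p : Fin 5 → ℝ) : Fin 5 → ℝ :=
  ![Real.sin (p 2), -Real.cos (p 2), 0,
    -(1 / s1 * (s2 / s1 - Real.cos (p 3))),
    1 / s3 * ((1 - s2) / s3 - Real.cos (p 4))]

/-- `ξ₄ = ∂θ − (1 − (s₂/s₁)cos φ)∂φ − (1 − ((1−s₂)/s₃)cos ψ)∂ψ`. -/
noncomputable def snakeXi4 (s1 s2 s3 : ℝ) (p : Fin 5 → ℝ) : Fin 5 → ℝ :=
  ![0, 0, 1, -(1 - s2 / s1 * Real.cos (p 3)), -(1 - (1 - s2) / s3 * Real.cos (p 4))]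

/-- `ξ₅ = cos θ ∂x + sin θ ∂y + (1/s₁)sin φ ∂φ − (1/s₃)sin ψ ∂ψ`. -/
noncomputable def snakeXi5 (s1 s3 : ℝ) (p : Fin 5 → ℝ) : Fin 5 → ℝ :=
  ![Real.cos (p 2), Real.sin (p 2), 0, 1 / s1 * Real.sin (p 3), -(1 / s3 * Real.sin (p 4))]

lemma linearIndependent_dual_of_det_apply_ne_zero {ι R M : Type*} [Fintype ι] [DecidableEq ι]
    [CommRing R] [IsDomain R] [AddCommMonoid M] [Module R M] {f : ι → Module.Dual R M} {v : ι → M}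
    (h : (Matrix.of fun i j ↦ f i (v j)).det ≠ 0) : LinearIndependent R f :=
  .of_comp (LinearMap.pi fun j ↦ LinearMap.applyₗ (v j))
    (Matrix.linearIndependent_rows_of_det_ne_zero h)

lemma dualCoannihilator_span_range_eq_iInf_ker {ι : Sort*} {R M : Type*} [CommSemiring R]
    [AddCommMonoid M] [Module R M] (f : ι → Module.Dual R M) :
    (Submodule.span R (Set.range f)).dualCoannihilator = ⨅ i, LinearMap.ker (f i) := by
  refine SetLike.coe_injective ?_
  rw [Submodule.coe_dualCoannihilator_span]
  ext x
  simp

lemma card_add_finrank_iInf_ker {ι K V : Type*} [Fintype ι] [Field K] [AddCommGroup V]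
    [Module K V] [FiniteDimensional K V] {f : ι → Module.Dual K V} (hf : LinearIndependent K f) :
    Fintype.card ι + Module.finrank K (⨅ i, LinearMap.ker (f i) : Submodule K V) =
      Module.finrank K V := by
  rw [← finrank_span_eq_card hf, ← dualCoannihilator_span_range_eq_iInf_ker]
  exact Subspace.finrank_add_finrank_dualCoannihilator_eq _

/-- The vectors `∂φ`, `sin θ ∂x − cos θ ∂y`, `∂ψ`, listed in the order of the covectors
`Υ¹, Υ², Υ³` they are paired with. If `s₁, s₃ ≠ 0`, they span a complement of the common kernel. -/
noncomputable def snakeTransversal (p : Fin 5 → ℝ) : Fin 3 → Fin 5 → ℝ :=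
  ![Pi.single 3 1, ![sin (p 2), -cos (p 2), 0, 0, 0], Pi.single 4 1]

lemma snakeUps_apply_snakeTransversal (s1 s2 s3 : ℝ) (p : Fin 5 → ℝ) :
    (Matrix.of fun i j ↦
      ![snakeUps1 s1 s2 p, snakeUps2 p, snakeUps3 s2 s3 p] i (snakeTransversal p j)) =
      !![s1, cos (p 3), 0;
         0, 1, 0;
         0, cos (p 4), -s3] := by
  have hcos (α : ℝ) : sin (α + p 2) * sin (p 2) + cos (α + p 2) * cos (p 2) = cos α := by
    rw [add_comm, ← cos_sub, add_sub_cancel_right]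
  have hone : sin (p 2) * sin (p 2) + cos (p 2) * cos (p 2) = 1 := by
    simp only [← sq, sin_sq_add_cos_sq]
  ext i j
  fin_cases i <;> fin_cases j <;>
    simp [snakeUps1, snakeUps2, snakeUps3, snakeTransversal, hcos, hone]

lemma det_snakeUps_apply_snakeTransversal (s1 s2 s3 : ℝ) (p : Fin 5 → ℝ) :
    (Matrix.of fun i j ↦
      ![snakeUps1 s1 s2 p, snakeUps2 p, snakeUps3 s2 s3 p] i (snakeTransversal p j)).det =
      -(s1 * s3) := by
  rw [snakeUps_apply_snakeTransversal]
  simp [Matrix.det_fin_three]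

theorem snake_pfaffian_rank_three_general {s1 s3 : ℝ} (hs1 : s1 ≠ 0) (hs3 : s3 ≠ 0) (s2 : ℝ)
    (p : Fin 5 → ℝ) :
    LinearIndependent ℝ ![snakeUps1 s1 s2 p, snakeUps2 p, snakeUps3 s2 s3 p] ∧
    Module.finrank ℝ
      (LinearMap.ker (snakeUps1 s1 s2 p) ⊓ LinearMap.ker (snakeUps2 p)
        ⊓ LinearMap.ker (snakeUps3 s2 s3 p) : Submodule ℝ (Fin 5 → ℝ)) = 2 := by
  have hind : LinearIndependent ℝ ![snakeUps1 s1 s2 p, snakeUps2 p, snakeUps3 s2 s3 p] := by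
    apply linearIndependent_dual_of_det_apply_ne_zero (v := snakeTransversal p)
    rw [det_snakeUps_apply_snakeTransversal]
    exact neg_ne_zero.mpr (mul_ne_zero hs1 hs3)
  have hker : LinearMap.ker (snakeUps1 s1 s2 p) ⊓ LinearMap.ker (snakeUps2 p)
      ⊓ LinearMap.ker (snakeUps3 s2 s3 p) =
      ⨅ i, LinearMap.ker (![snakeUps1 s1 s2 p, snakeUps2 p, snakeUps3 s2 s3 p] i) := by
    ext v
    simp [Fin.forall_fin_succ, and_assoc]
  have hdim := card_add_finrank_iInf_ker hind
  rw [Fintype.card_fin, Module.finrank_fin_fun] at hdim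
  refine ⟨hind, ?_⟩
  rw [hker]
  omega

/-- At every point of `ℝ⁵` the covectors `Υ¹(p), Υ²(p), Υ³(p)` are linearly
independent, so their common kernel is 2-dimensional. -/
theorem snake_pfaffian_rank_three (s1 s2 s3 : ℝ) (hs1 : 0 < s1) (hs3 : 0 < s3)
    (hs2 : s2 ∈ Set.Ioo (0 : ℝ) 1) (p : Fin 5 → ℝ) :
    LinearIndependent ℝ ![snakeUps1 s1 s2 p, snakeUps2 p, snakeUps3 s2 s3 p] ∧
    Module.finrank ℝ
      (LinearMap.ker (snakeUps1 s1 s2 p) ⊓ LinearMap.ker (snakeUps2 p)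
        ⊓ LinearMap.ker (snakeUps3 s2 s3 p) : Submodule ℝ (Fin 5 → ℝ)) = 2 :=
  snake_pfaffian_rank_three_general hs1.ne' hs3.ne' s2 p
end

section
/- Let s1, s3 > 0 and s2 ∈ (0,1). The Lie bracket of the vector fields ξ5 and ξ4 on ℝ^5 equals the vector field ξ3; that is, at every point p ∈ ℝ^5, Dξ4(p)(ξ5(p)) − Dξ5(p)(ξ4(p)) = ξ3(p), where ξ3 = sin θ·∂x − cos θ·∂y − (1/s1)((s2/s1) − cos φ)∂φ + (1/s3)(((1−s2)/s3) − cos ψ)∂ψ. -/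
/-!
Every component of `ξ₄` and `ξ₅` is a function of a single coordinate, so by the chain rule each
component of the bracket involves only derivatives in one variable. The `φ` and `ψ` components are
both instances of one bracket on the line,
`[a sin x ∂ₓ, -(1 - c cos x) ∂ₓ] = a (cos x - c) ∂ₓ`, with `(a, c) = (1 / s₁, s₂ / s₁)` and
`(a, c) = (-1 / s₃, (1 - s₂) / s₃)` respectively.
-/

open Real

section PiCompApply

variable {𝕜 ι κ : Type*} [NontriviallyNormedField 𝕜]
  {E : ι → Type*} [∀ i, NormedAddCommGroup (E i)] [∀ i, NormedSpace 𝕜 (E i)]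

lemma hasFDerivAt_pi_comp_apply [Finite ι] [Finite κ]
    {F : κ → Type*} [∀ j, NormedAddCommGroup (F j)] [∀ j, NormedSpace 𝕜 (F j)]
    {k : κ → ι} {f : ∀ j, E (k j) → F j} {p : ∀ i, E i}
    (hf : ∀ j, DifferentiableAt 𝕜 (f j) (p (k j))) :
    HasFDerivAt (fun (q : ∀ i, E i) j ↦ f j (q (k j)))
      (ContinuousLinearMap.pi fun j ↦
        (fderiv 𝕜 (f j) (p (k j))).comp (ContinuousLinearMap.proj (k j))) p := by
  have := Fintype.ofFinite ι
  have := Fintype.ofFinite κ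
  exact hasFDerivAt_pi.2 fun j ↦ (hf j).hasFDerivAt.comp p (hasFDerivAt_apply (k j) p)

lemma lieBracket_pi_comp_apply [Fintype ι] {k l : ι → ι} {f : ∀ i, E (k i) → E i}
    {g : ∀ i, E (l i) → E i} {p : ∀ i, E i} (hf : ∀ i, DifferentiableAt 𝕜 (f i) (p (k i)))
    (hg : ∀ i, DifferentiableAt 𝕜 (g i) (p (l i))) (i : ι) :
    VectorField.lieBracket 𝕜 (fun q i ↦ f i (q (k i))) (fun q i ↦ g i (q (l i))) p i =
      fderiv 𝕜 (g i) (p (l i)) (f (l i) (p (k (l i)))) -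
        fderiv 𝕜 (f i) (p (k i)) (g (k i) (p (l (k i)))) := by
  rw [VectorField.lieBracket, (hasFDerivAt_pi_comp_apply hf).fderiv,
    (hasFDerivAt_pi_comp_apply hg).fderiv]
  rfl

end PiCompApply

lemma lieBracket_mul_sin_neg_one_sub_mul_cos (a c x : ℝ) :
    VectorField.lieBracket ℝ (fun t ↦ a * sin t) (fun t ↦ -(1 - c * cos t)) x =
      a * (cos x - c) := by
  have h_sin : HasDerivAt (fun t ↦ a * sin t) (a * cos x) x := (hasDerivAt_sin x).const_mul a
  have h_cos : HasDerivAt (fun t ↦ -(1 - c * cos t)) (-(-(c * -sin x))) x :=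
    (((hasDerivAt_cos x).const_mul c).const_sub 1).fun_neg
  simp only [VectorField.lieBracket, fderiv_eq_smul_deriv, h_sin.deriv, h_cos.deriv, smul_eq_mul]
  linear_combination (-(a * c)) * sin_sq_add_cos_sq x

theorem snake_bracket_xi5_xi4_general (a b c d : ℝ) (p : Fin 5 → ℝ) :
    VectorField.lieBracket ℝ
      (fun q : Fin 5 → ℝ ↦ ![cos (q 2), sin (q 2), 0, a * sin (q 3), -(b * sin (q 4))])
      (fun q : Fin 5 → ℝ ↦ ![0, 0, 1, -(1 - c * cos (q 3)), -(1 - d * cos (q 4))]) p =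
    ![sin (p 2), -cos (p 2), 0, -(a * (c - cos (p 3))), b * (d - cos (p 4))] := by
  let k : Fin 5 → Fin 5 := ![2, 2, 2, 3, 4]
  let f : Fin 5 → ℝ → ℝ := ![cos, sin, 0, fun t ↦ a * sin t, fun t ↦ -b * sin t]
  let g : Fin 5 → ℝ → ℝ := ![0, 0, 1, fun t ↦ -(1 - c * cos t), fun t ↦ -(1 - d * cos t)]
  have hf_diff (i) : DifferentiableAt ℝ (f i) (p (k i)) := by
    fin_cases i <;> dsimp [f] <;> fun_prop
  have hg_diff (i) : DifferentiableAt ℝ (g i) (p (k i)) := by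
    fin_cases i <;> dsimp [g] <;> fun_prop
  have hf : (fun q : Fin 5 → ℝ ↦ ![cos (q 2), sin (q 2), 0, a * sin (q 3), -(b * sin (q 4))]) =
      fun q i ↦ f i (q (k i)) := by
    ext q i; fin_cases i <;> simp [f, k]
  have hg : (fun q : Fin 5 → ℝ ↦ ![0, 0, 1, -(1 - c * cos (q 3)), -(1 - d * cos (q 4))]) =
      fun q i ↦ g i (q (k i)) := by
    ext q i; fin_cases i <;> rfl
  ext i
  rw [hf, hg, lieBracket_pi_comp_apply hf_diff hg_diff]
  fin_cases i
  · simp [f, g, k]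
  · simp [f, g, k]
  · simp [f, g, k]
  · exact (lieBracket_mul_sin_neg_one_sub_mul_cos a c (p 3)).trans (by dsimp; ring)
  · exact (lieBracket_mul_sin_neg_one_sub_mul_cos (-b) d (p 4)).trans (by dsimp; ring)

/-- The Lie bracket `[ξ₅, ξ₄] = Dξ₄(ξ₅) − Dξ₅(ξ₄)` equals `ξ₃`. -/
theorem snake_bracket_xi5_xi4 (s1 s2 s3 : ℝ) (hs1 : 0 < s1) (hs3 : 0 < s3)
    (hs2 : s2 ∈ Set.Ioo (0 : ℝ) 1) (p : Fin 5 → ℝ) :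
    fderiv ℝ (snakeXi4 s1 s2 s3) p (snakeXi5 s1 s3 p)
      - fderiv ℝ (snakeXi5 s1 s3) p (snakeXi4 s1 s2 s3 p) = snakeXi3 s1 s2 s3 p := by
  exact snake_bracket_xi5_xi4_general (1 / s1) (1 / s3) (s2 / s1) ((1 - s2) / s3) p
end

section
/- Let s1, s3 > 0 and s2 ∈ (0,1). The Lie bracket of the vector fields ξ5 and ξ3 on ℝ^5 equals the vector field ξ2; that is, at every point p ∈ ℝ^5, Dξ3(p)(ξ5(p)) − Dξ5(p)(ξ3(p)) = ξ2(p), where ξ2 = −(1/s1²)(1 − (s2/s1)cos φ)∂φ − (1/s3²)(1 − ((1−s2)/s3)cos ψ)∂ψ. -/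
open Real

/-!
In each of `ξ₅` and `ξ₃` every component depends on a single angle, so a component of the bracket
needs only one ordinary derivative of each field. The `∂x`, `∂y` and `∂θ` components of the bracket
are combinations of the vanishing `∂θ` components of the fields. The `∂φ` and `∂ψ` components are
both the one-variable bracket of `a sin t ∂t` and `-a(b - cos t) ∂t`, with `(a, b) = (1/s₁, s₂/s₁)`
and `(a, b) = (-1/s₃, (1 - s₂)/s₃)`; it equals `-a²(1 - b cos t) ∂t` by `sin² + cos² = 1`.
-/

open ContinuousLinearMap (proj)
open VectorField (lieBracket)

section SingleCoordinate

variable {𝕜 E F G : Type*} [NontriviallyNormedField 𝕜] [NormedAddCommGroup E] [NormedSpace 𝕜 E]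
  [NormedAddCommGroup F] [NormedSpace 𝕜 F] [NormedAddCommGroup G] [NormedSpace 𝕜 G]

lemma clm_fderiv_apply_of_clm_eq_comp {X : E → F} {p : E} (L : F →L[𝕜] G) (ℓ : E →L[𝕜] 𝕜)
    {f : 𝕜 → G} {f' : G} (hX : DifferentiableAt 𝕜 X p) (hLX : ∀ q, L (X q) = f (ℓ q))
    (hf : HasDerivAt f f' (ℓ p)) (v : E) :
    L (fderiv 𝕜 X p v) = ℓ v • f' := by
  have hcomp : L ∘ X = f ∘ ℓ := funext hLX
  calc
    L (fderiv 𝕜 X p v) = fderiv 𝕜 (L ∘ X) p v := by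
      rw [(L.hasFDerivAt.comp p hX.hasFDerivAt).fderiv, ContinuousLinearMap.comp_apply]
    _ = fderiv 𝕜 (f ∘ ℓ) p v := by rw [hcomp]
    _ = ℓ v • f' := by
      rw [(hf.hasFDerivAt.comp p ℓ.hasFDerivAt).fderiv, ContinuousLinearMap.comp_apply,
        ContinuousLinearMap.toSpanSingleton_apply]

variable {X Y : E → E} {p : E} {f g : 𝕜 → G} {f' g' : G}

lemma clm_lieBracket_of_clm_eq_comp (L : E →L[𝕜] G) (ℓ : E →L[𝕜] 𝕜)
    (hX : DifferentiableAt 𝕜 X p) (hY : DifferentiableAt 𝕜 Y p)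
    (hLX : ∀ q, L (X q) = f (ℓ q)) (hf : HasDerivAt f f' (ℓ p))
    (hLY : ∀ q, L (Y q) = g (ℓ q)) (hg : HasDerivAt g g' (ℓ p)) :
    L (lieBracket 𝕜 X Y p) = ℓ (X p) • g' - ℓ (Y p) • f' := by
  rw [VectorField.lieBracket, map_sub, clm_fderiv_apply_of_clm_eq_comp L ℓ hY hLY hg,
    clm_fderiv_apply_of_clm_eq_comp L ℓ hX hLX hf]

lemma clm_lieBracket_eq_zero_of_clm_eq_comp (L : E →L[𝕜] G) (ℓ : E →L[𝕜] 𝕜)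
    (hX : DifferentiableAt 𝕜 X p) (hY : DifferentiableAt 𝕜 Y p)
    (hLX : ∀ q, L (X q) = f (ℓ q)) (hf : HasDerivAt f f' (ℓ p))
    (hLY : ∀ q, L (Y q) = g (ℓ q)) (hg : HasDerivAt g g' (ℓ p))
    (hℓX : ℓ (X p) = 0) (hℓY : ℓ (Y p) = 0) :
    L (lieBracket 𝕜 X Y p) = 0 := by
  rw [clm_lieBracket_of_clm_eq_comp L ℓ hX hY hLX hf hLY hg, hℓX, hℓY, zero_smul, zero_smul,
    sub_zero]

end SingleCoordinate

lemma clm_lieBracket_of_sin_of_sub_cos {E : Type*} [NormedAddCommGroup E] [NormedSpace ℝ E]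
    {X Y : E → E} {p : E} (ℓ : E →L[ℝ] ℝ) (a b : ℝ)
    (hX : DifferentiableAt ℝ X p) (hY : DifferentiableAt ℝ Y p)
    (hℓX : ∀ q, ℓ (X q) = a * sin (ℓ q)) (hℓY : ∀ q, ℓ (Y q) = -(a * (b - cos (ℓ q)))) :
    ℓ (lieBracket ℝ X Y p) = -(a ^ 2 * (1 - b * cos (ℓ p))) := by
  have hf := (hasDerivAt_sin (ℓ p)).const_mul a
  have hg := (((hasDerivAt_cos (ℓ p)).const_sub b).const_mul a).neg
  rw [clm_lieBracket_of_clm_eq_comp ℓ ℓ hX hY hℓX hf hℓY hg, hℓX, hℓY, smul_eq_mul, smul_eq_mul]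
  linear_combination -a ^ 2 * sin_sq_add_cos_sq (ℓ p)

lemma differentiable_snakeXi3 (s1 s2 s3 : ℝ) : Differentiable ℝ (snakeXi3 s1 s2 s3) := by
  refine differentiable_pi.2 fun i ↦ ?_
  fin_cases i <;> dsimp [snakeXi3] <;> fun_prop

lemma differentiable_snakeXi5 (s1 s3 : ℝ) : Differentiable ℝ (snakeXi5 s1 s3) := by
  refine differentiable_pi.2 fun i ↦ ?_
  fin_cases i <;> dsimp [snakeXi5] <;> fun_prop

theorem snake_bracket_xi5_xi3_general {s1 s3 : ℝ} (_hs1 : s1 ≠ 0) (_hs3 : s3 ≠ 0) (s2 : ℝ) :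
    lieBracket ℝ (snakeXi5 s1 s3) (snakeXi3 s1 s2 s3) = snakeXi2 s1 s2 s3 := by
  ext p i
  have h5 : DifferentiableAt ℝ (snakeXi5 s1 s3) p := differentiable_snakeXi5 s1 s3 p
  have h3 : DifferentiableAt ℝ (snakeXi3 s1 s2 s3) p := differentiable_snakeXi3 s1 s2 s3 p
  have h5θ : snakeXi5 s1 s3 p 2 = 0 := rfl
  have h3θ : snakeXi3 s1 s2 s3 p 2 = 0 := rfl
  fin_cases i
  · exact clm_lieBracket_eq_zero_of_clm_eq_comp (proj 0) (proj 2) h5 h3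
      (fun _ ↦ rfl) (hasDerivAt_cos (p 2)) (fun _ ↦ rfl) (hasDerivAt_sin (p 2)) h5θ h3θ
  · exact clm_lieBracket_eq_zero_of_clm_eq_comp (proj 1) (proj 2) h5 h3
      (fun _ ↦ rfl) (hasDerivAt_sin (p 2)) (fun _ ↦ rfl) (hasDerivAt_cos (p 2)).neg h5θ h3θ
  · exact clm_lieBracket_eq_zero_of_clm_eq_comp (proj 2) (proj 2) h5 h3
      (fun _ ↦ rfl) (hasDerivAt_const (p 2) 0) (fun _ ↦ rfl) (hasDerivAt_const (p 2) 0) h5θ h3θ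
  · have hφ := clm_lieBracket_of_sin_of_sub_cos (proj 3) (1 / s1) (s2 / s1) h5 h3
      (fun _ ↦ rfl) (fun _ ↦ rfl)
    rwa [one_div_pow] at hφ
  · have hψ := clm_lieBracket_of_sin_of_sub_cos (proj 4) (-(1 / s3)) ((1 - s2) / s3) h5 h3
      (fun _ ↦ (neg_mul _ _).symm) (fun _ ↦ by rw [neg_mul, neg_neg]; rfl)
    rwa [neg_sq, one_div_pow] at hψ

/-- The Lie bracket `[ξ₅, ξ₃] = Dξ₃(ξ₅) − Dξ₅(ξ₃)` equals `ξ₂`. -/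
theorem snake_bracket_xi5_xi3 (s1 s2 s3 : ℝ) (hs1 : 0 < s1) (hs3 : 0 < s3)
    (hs2 : s2 ∈ Set.Ioo (0 : ℝ) 1) (p : Fin 5 → ℝ) :
    fderiv ℝ (snakeXi3 s1 s2 s3) p (snakeXi5 s1 s3 p)
      - fderiv ℝ (snakeXi5 s1 s3) p (snakeXi3 s1 s2 s3 p) = snakeXi2 s1 s2 s3 p := by
  exact congrFun (snake_bracket_xi5_xi3_general hs1.ne' hs3.ne' s2) p
end

section
/- Let s1, s3 > 0 and s2 ∈ (0,1). At every point p = (x, y, θ, φ, ψ) ∈ ℝ^5, the three vectors ξ3(p), ξ4(p), ξ5(p) are linearly independent; in particular ξ3(p) does not lie in the span of ξ4(p) and ξ5(p), so the bracket [ξ5, ξ4] = ξ3 takes the rank-2 distribution spanned by ξ4, ξ5 to a rank-3 distribution. -/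
/-!
The projections of `ξ₃` and `ξ₅` to the `(x, y)`-plane are the orthonormal vectors
`(sin θ, -cos θ)` and `(cos θ, sin θ)`, and neither has a `∂θ`-component, while `ξ₄` projects to
`∂θ`. Hence the minor of `ξ₃, ξ₄, ξ₅` in the columns `x, y, θ` is `-(sin² θ + cos² θ) = -1`,
whatever their `∂φ`- and `∂ψ`-components are.
-/

open Real

/-- The rows are the `(x, y, θ)`-components of `ξ₃, ξ₄, ξ₅`: the unit normal to the direction `θ`,
the rotation field `∂θ` and the unit vector in the direction `θ`. They form a left-invariant frame
of the group of planar rigid motions. -/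
noncomputable def headingFrame (θ : ℝ) : Matrix (Fin 3) (Fin 3) ℝ :=
  !![sin θ, -cos θ, 0; 0, 0, 1; cos θ, sin θ, 0]

theorem det_headingFrame (θ : ℝ) : (headingFrame θ).det = -1 := by
  simp only [headingFrame, Matrix.det_fin_three, Matrix.of_apply, Matrix.cons_val]
  linear_combination -sin_sq_add_cos_sq θ

theorem linearIndependent_row_of_det_submatrix_ne_zero {R m n : Type*} [CommRing R] [IsDomain R]
    [Fintype m] [DecidableEq m] {A : Matrix m n R} (e : m → n)
    (h : (A.submatrix id e).det ≠ 0) : LinearIndependent R A.row :=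
  .of_comp (LinearMap.funLeft R R e) (Matrix.linearIndependent_rows_of_det_ne_zero h)

theorem notMem_span_pair_of_linearIndependent {R M : Type*} [Ring R] [Nontrivial R]
    [AddCommGroup M] [Module R M] {x y z : M} (h : LinearIndependent R ![x, y, z]) :
    x ∉ Submodule.span R {y, z} := by
  simpa [Set.image_pair] using h.notMem_span_image (s := {1, 2}) (x := 0) (by simp)

theorem submatrix_snakeXi_eq_headingFrame (s1 s2 s3 : ℝ) (p : Fin 5 → ℝ) :
    (Matrix.of ![snakeXi3 s1 s2 s3 p, snakeXi4 s1 s2 s3 p, snakeXi5 s1 s3 p]).submatrix id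
      ![0, 1, 2] = headingFrame (p 2) := by
  ext i j
  fin_cases i <;> fin_cases j <;> rfl

theorem snake_xi3_xi4_xi5_independent_general {ι : Type*} {x y z : ι → ℝ} {θ : ℝ}
    (e : Fin 3 → ι) (h : (Matrix.of ![x, y, z]).submatrix id e = headingFrame θ) :
    LinearIndependent ℝ ![x, y, z] ∧ x ∉ Submodule.span ℝ {y, z} := by
  have hdet : ((Matrix.of ![x, y, z]).submatrix id e).det ≠ 0 := by
    simp [h, det_headingFrame]
  have hli : LinearIndependent ℝ ![x, y, z] :=
    linearIndependent_row_of_det_submatrix_ne_zero e hdet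
  exact ⟨hli, notMem_span_pair_of_linearIndependent hli⟩

/-- At every point of `ℝ⁵`, the vectors `ξ₃(p), ξ₄(p), ξ₅(p)` are linearly
independent; in particular `ξ₃(p)` is not in the span of `ξ₄(p)` and `ξ₅(p)`. -/
theorem snake_xi3_xi4_xi5_independent (s1 s2 s3 : ℝ) (hs1 : 0 < s1) (hs3 : 0 < s3)
    (hs2 : s2 ∈ Set.Ioo (0 : ℝ) 1) (p : Fin 5 → ℝ) :
    LinearIndependent ℝ ![snakeXi3 s1 s2 s3 p, snakeXi4 s1 s2 s3 p, snakeXi5 s1 s3 p] ∧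
    snakeXi3 s1 s2 s3 p ∉
      Submodule.span ℝ ({snakeXi4 s1 s2 s3 p, snakeXi5 s1 s3 p} : Set (Fin 5 → ℝ)) :=
  snake_xi3_xi4_xi5_independent_general ![0, 1, 2] (submatrix_snakeXi_eq_headingFrame s1 s2 s3 p)
end

section
/- Let s1, s3 > 0 and s2 ∈ (0,1). At the point p0 = (0, 0, 0, π/2, π/2) ∈ ℝ^5, the five vectors ξ1(p0), ξ2(p0), ξ3(p0), ξ4(p0), ξ5(p0) are linearly independent, i.e., they form a basis of ℝ^5. (Hence the distribution spanned by ξ4, ξ5 is bracket generating with growth vector (2,3,5) at p0.) -/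
/-!
In the frame `cos θ ∂x + sin θ ∂y`, `sin θ ∂x − cos θ ∂y`, `∂θ`, the parts of `ξ₅`, `ξ₃`, `ξ₄`
without `∂φ`, `∂ψ` are the three frame vectors, while `ξ₁ − ξ₅` and `ξ₂` have no such part. Hence
`det (ξ₁, …, ξ₅)` is, up to sign, the `2 × 2` determinant of `ξ₁ − ξ₅` and `ξ₂` in the
`(φ, ψ)`-plane. Clearing denominators, its numerator is
`s₂² sin φ (s₃ − (1−s₂) cos ψ) + (1−s₂)² sin ψ (s₁ − s₂ cos φ)`, which at `φ = ψ = π/2` becomes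
`s₂² s₃ + (1−s₂)² s₁`, a positive number.
-/

open Real

/-- The frame `ξ₁, …, ξ₅` at `p`; entry `i` is `ξᵢ₊₁`. -/
noncomputable def snakeFrame (s1 s2 s3 : ℝ) (p : Fin 5 → ℝ) : Fin 5 → Fin 5 → ℝ :=
  ![snakeXi1 s1 s2 s3 p, snakeXi2 s1 s2 s3 p, snakeXi3 s1 s2 s3 p, snakeXi4 s1 s2 s3 p,
    snakeXi5 s1 s3 p]

/-- For `s₁, s₃ ≠ 0`, the function whose zero set is the locus where `ξ₁, …, ξ₅` fail to be a
basis: the determinant of the frame, multiplied by `-(s₁s₃)³` to clear denominators. -/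
noncomputable def snakeDegeneracy (s1 s2 s3 : ℝ) (p : Fin 5 → ℝ) : ℝ :=
  s2 ^ 2 * sin (p 3) * (s3 - (1 - s2) * cos (p 4)) +
    (1 - s2) ^ 2 * sin (p 4) * (s1 - s2 * cos (p 3))

theorem det_eq_neg_mul_det_sub_row {R : Type*} [CommRing R]
    (c s a₁ b₁ a₂ b₂ a₃ b₃ a₄ b₄ a₅ b₅ : R) :
    Matrix.det !![c, s, 0, a₁, b₁;
                  0, 0, 0, a₂, b₂;
                  s, -c, 0, a₃, b₃;
                  0, 0, 1, a₄, b₄;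
                  c, s, 0, a₅, b₅] =
      -(c ^ 2 + s ^ 2) * Matrix.det !![a₁ - a₅, b₁ - b₅; a₂, b₂] := by
  set M := !![c, s, 0, a₁, b₁; 0, 0, 0, a₂, b₂; s, -c, 0, a₃, b₃; 0, 0, 1, a₄, b₄; c, s, 0, a₅, b₅]
  set P := !![a₁ - a₅, b₁ - b₅; a₂, b₂]
  let Q := !![s, -c, 0; 0, 0, 1; c, s, 0]
  let N : Matrix (Fin 5) (Fin 5) R := Matrix.reindex finSumFinEquiv finSumFinEquiv
    (Matrix.fromBlocks P 0 !![a₃, b₃; a₄, b₄; a₅, b₅] Q)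
  -- `σ` moves the last two columns to the front, exposing the zero block.
  let σ : Equiv.Perm (Fin 5) := finRotate 5 ^ 2
  have hrow : M.updateRow 0 (M 0 + (-1 : R) • M 4) = N.submatrix id σ := by
    trans !![0, 0, 0, a₁ - a₅, b₁ - b₅; 0, 0, 0, a₂, b₂; s, -c, 0, a₃, b₃; 0, 0, 1, a₄, b₄;
      c, s, 0, a₅, b₅]
    · ext i j
      fin_cases i <;> fin_cases j <;> simp [M, sub_eq_add_neg]
    · ext i j
      fin_cases i <;> fin_cases j <;> rfl
  have hσ : Equiv.Perm.sign σ = 1 := by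
    simp [σ]
  have hN : N.det = P.det * Q.det := by
    rw [Matrix.det_reindex_self, Matrix.det_fromBlocks_zero₁₂]
  have hQ : Q.det = -(c ^ 2 + s ^ 2) := by
    simp [Q, Matrix.det_fin_three, ← sq, neg_add_eq_sub]
  calc M.det = (M.updateRow 0 (M 0 + (-1 : R) • M 4)).det :=
        (Matrix.det_updateRow_add_smul_self M (by decide) (-1)).symm
    _ = N.det := by rw [hrow, Matrix.det_permute', hσ, Units.val_one, Int.cast_one, one_mul]
    _ = -(c ^ 2 + s ^ 2) * P.det := by rw [hN, hQ, mul_comm]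

theorem det_snakeFrame {s1 s3 : ℝ} (hs1 : s1 ≠ 0) (hs3 : s3 ≠ 0) (s2 : ℝ) (p : Fin 5 → ℝ) :
    (Matrix.of (snakeFrame s1 s2 s3 p)).det = -snakeDegeneracy s1 s2 s3 p / (s1 * s3) ^ 3 := by
  refine (det_eq_neg_mul_det_sub_row ..).trans ?_
  rw [cos_sq_add_sin_sq, Matrix.det_fin_two_of, snakeDegeneracy]
  field_simp
  ring

theorem linearIndependent_snakeFrame_iff {s1 s3 : ℝ} (hs1 : s1 ≠ 0) (hs3 : s3 ≠ 0) (s2 : ℝ)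
    (p : Fin 5 → ℝ) :
    LinearIndependent ℝ (snakeFrame s1 s2 s3 p) ↔ snakeDegeneracy s1 s2 s3 p ≠ 0 := by
  have hrows : LinearIndependent ℝ (snakeFrame s1 s2 s3 p) ↔
      (Matrix.of (snakeFrame s1 s2 s3 p)).det ≠ 0 := by
    rw [← isUnit_iff_ne_zero, ← Matrix.isUnit_iff_isUnit_det]
    exact Matrix.linearIndependent_rows_iff_isUnit
  simp [hrows, det_snakeFrame hs1 hs3, hs1, hs3]

theorem snakeDegeneracy_pi_div_two_pos {s1 s3 : ℝ} (hs1 : 0 < s1) (hs3 : 0 < s3) (s2 x y θ : ℝ) :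
    0 < snakeDegeneracy s1 s2 s3 ![x, y, θ, π / 2, π / 2] := by
  have hval : snakeDegeneracy s1 s2 s3 ![x, y, θ, π / 2, π / 2] =
      s2 ^ 2 * s3 + (1 - s2) ^ 2 * s1 := by
    simp [snakeDegeneracy]
  rw [hval]
  obtain rfl | hs2 := eq_or_ne s2 0
  · simpa using hs1
  · exact add_pos_of_pos_of_nonneg (mul_pos (sq_pos_of_ne_zero hs2) hs3) (by positivity)

theorem snake_growth_235_at_point_general {s1 s2 s3 : ℝ} (hs1 : s1 ≠ 0) (hs3 : s3 ≠ 0)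
    {p : Fin 5 → ℝ} (hp : snakeDegeneracy s1 s2 s3 p ≠ 0) :
    LinearIndependent ℝ (snakeFrame s1 s2 s3 p) ∧
      Submodule.span ℝ (Set.range (snakeFrame s1 s2 s3 p)) = ⊤ :=
  have hli := (linearIndependent_snakeFrame_iff hs1 hs3 s2 p).mpr hp
  ⟨hli, hli.span_eq_top_of_card_eq_finrank (by simp)⟩

/-- At the point `p₀ = (0, 0, 0, π/2, π/2)`, the five vectors `ξ₁(p₀), …, ξ₅(p₀)`
are linearly independent, hence form a basis of `ℝ⁵`. -/
theorem snake_growth_235_at_point (s1 s2 s3 : ℝ) (hs1 : 0 < s1) (hs3 : 0 < s3)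
    (hs2 : s2 ∈ Set.Ioo (0 : ℝ) 1) :
    LinearIndependent ℝ
      ![snakeXi1 s1 s2 s3 ![0, 0, 0, π / 2, π / 2],
        snakeXi2 s1 s2 s3 ![0, 0, 0, π / 2, π / 2],
        snakeXi3 s1 s2 s3 ![0, 0, 0, π / 2, π / 2],
        snakeXi4 s1 s2 s3 ![0, 0, 0, π / 2, π / 2],
        snakeXi5 s1 s3 ![0, 0, 0, π / 2, π / 2]] ∧
    Submodule.span ℝ (Set.range
      ![snakeXi1 s1 s2 s3 ![0, 0, 0, π / 2, π / 2],
        snakeXi2 s1 s2 s3 ![0, 0, 0, π / 2, π / 2],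
        snakeXi3 s1 s2 s3 ![0, 0, 0, π / 2, π / 2],
        snakeXi4 s1 s2 s3 ![0, 0, 0, π / 2, π / 2],
        snakeXi5 s1 s3 ![0, 0, 0, π / 2, π / 2]]) = ⊤ :=
  snake_growth_235_at_point_general hs1.ne' hs3.ne'
    (snakeDegeneracy_pi_div_two_pos hs1 hs3 s2 0 0 0).ne'
end

section
/- The set H of complex 5×5 matrices of the form with rows (g1·ḡ1², 0, 0, 0, 0), (0, g1²·ḡ1, 0, 0, 0), (ḡ3, g3, g1·ḡ1, 0, 0), (ḡ5, g4, ḡ2, ḡ1, 0), (ḡ4, g5, g2, 0, g1), where g1, g2, g3, g4, g5 ∈ ℂ and g1 ≠ 0, is a subgroup of GL(5, ℂ): every such matrix is invertible, the identity matrix belongs to H, the product of any two matrices in H belongs to H, and the inverse of any matrix in H belongs to H. -/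
/-!
`H` is cut out of the group of invertible lower triangular matrices by two kinds of conditions,
each of which visibly defines a subgroup. First, `H` is fixed by the conjugate-linear ring
automorphism that conjugates every entry and interchanges the indices `0 ↔ 1` and `3 ↔ 4`;
together with triangularity this also forces the zeros at `(1, 0)` and `(4, 3)`. Second, the
diagonal entries, which are multiplicative on triangular matrices, satisfy `a₀₀ = a₂₂ a₃₃` and
`a₂₂ = a₃₃ a₄₄`.
-/

open Matrix

/-- The matrix of the structure group `H` of the Cartan equivalence problem for
`(2,3,5)` CR structures, where `star` is complex conjugation. -/
def Hmat (g1 g2 g3 g4 g5 : ℂ) : Matrix (Fin 5) (Fin 5) ℂ :=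
  !![g1 * (star g1) ^ 2, 0, 0, 0, 0;
     0, g1 ^ 2 * star g1, 0, 0, 0;
     star g3, g3, g1 * star g1, 0, 0;
     star g5, g4, star g2, star g1, 0;
     star g4, g5, g2, 0, g1]

/-- The set `H ⊆ Matrix (Fin 5) (Fin 5) ℂ`. -/
def Hset : Set (Matrix (Fin 5) (Fin 5) ℂ) :=
  {A | ∃ g1 g2 g3 g4 g5 : ℂ, g1 ≠ 0 ∧ A = Hmat g1 g2 g3 g4 g5}

section LowerTriangular

variable {n R : Type*} [Fintype n] [LinearOrder n]

lemma isLowerTriangular_mul_apply_self [NonUnitalNonAssocSemiring R] {A B : Matrix n n R}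
    (hA : A.IsLowerTriangular) (hB : B.IsLowerTriangular) (i : n) :
    (A * B) i i = A i i * B i i := by
  rw [mul_apply]
  refine Finset.sum_eq_single i (fun k _ hki ↦ ?_) (by simp)
  rcases hki.lt_or_gt with hlt | hgt
  · rw [hB (OrderDual.toDual_lt_toDual.mpr hlt), mul_zero]
  · rw [hA (OrderDual.toDual_lt_toDual.mpr hgt), zero_mul]

variable (n R) [CommRing R]

/-- The group of invertible lower triangular matrices, as a subgroup of the general linear group. -/
def lowerTriangularGL : Subgroup (GL n R) where
  carrier := {A | A.val.IsLowerTriangular}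
  one_mem' := blockTriangular_one
  mul_mem' := BlockTriangular.mul
  inv_mem' {A} hA := by
    have := A.invertible
    rw [Set.mem_ofPred_eq, coe_units_inv]
    exact blockTriangular_inv_of_blockTriangular hA

variable {n R}

/-- The character of the lower triangular group given by the `i`-th diagonal entry. -/
def diagHom (i : n) : lowerTriangularGL n R →* R where
  toFun A := A.1.val i i
  map_one' := one_apply_eq i
  map_mul' A B := isLowerTriangular_mul_apply_self A.2 B.2 i

end LowerTriangular

section ConjReindex

variable {n R : Type*} [Fintype n] [DecidableEq n] [CommSemiring R] [StarRing R]

/-- The conjugate-linear automorphism of a matrix ring that conjugates every entry and permutes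
rows and columns by `e`, as a ring homomorphism. Its fixed points play the role of a real form. -/
def conjReindex (e : Equiv.Perm n) : Matrix n n R →+* Matrix n n R :=
  (reindexRingEquiv R e).toRingHom.comp (starRingEnd R).mapMatrix

lemma conjReindex_eq_self_iff {e : Equiv.Perm n} {A : Matrix n n R} :
    conjReindex e A = A ↔ ∀ i j, A (e i) (e j) = star (A i j) := by
  rw [← Matrix.ext_iff, e.symm.forall_congr_left]
  refine forall_congr' fun i ↦ ?_
  rw [e.symm.forall_congr_left]
  simp [conjReindex, starRingEnd_apply, eq_comm (b := A (e i) _)]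

end ConjReindex

/-- The involution of the index set that underlies the conjugation symmetry of `H`. -/
def indexSwap : Equiv.Perm (Fin 5) :=
  Function.Involutive.toPerm ![1, 0, 2, 4, 3] (by unfold Function.Involutive; decide)

/-- `H` as a group, cut out of the lower triangular group by the conjugation symmetry and by
the multiplicative relations between the diagonal entries. It is a subgroup of the triangular
group rather than of `GL (Fin 5) ℂ` because only there are the diagonal entries multiplicative. -/
def structureGroup : Subgroup (lowerTriangularGL (Fin 5) ℂ) :=
  ((Units.map (conjReindex indexSwap).toMonoidHom).eqLocus (MonoidHom.id _)).subgroupOf _ ⊓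
    ((diagHom 0).eqLocus (diagHom 2 * diagHom 3) ⊓ (diagHom 2).eqLocus (diagHom 3 * diagHom 4))

lemma mem_structureGroup_iff {A : lowerTriangularGL (Fin 5) ℂ} :
    A ∈ structureGroup ↔
      (∀ i j, A.1.val (indexSwap i) (indexSwap j) = star (A.1.val i j)) ∧
      A.1.val 0 0 = A.1.val 2 2 * A.1.val 3 3 ∧ A.1.val 2 2 = A.1.val 3 3 * A.1.val 4 4 :=
  and_congr_left' (Units.ext_iff.trans conjReindex_eq_self_iff)

lemma Hmat_isLowerTriangular (g1 g2 g3 g4 g5 : ℂ) : (Hmat g1 g2 g3 g4 g5).IsLowerTriangular := by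
  intro i j hij
  fin_cases i <;> fin_cases j <;> first | rfl | exact absurd hij (by decide)

lemma isUnit_Hmat {g1 : ℂ} (hg : g1 ≠ 0) (g2 g3 g4 g5 : ℂ) : IsUnit (Hmat g1 g2 g3 g4 g5) := by
  rw [isUnit_iff_isUnit_det, det_of_isLowerTriangular _ (Hmat_isLowerTriangular ..)]
  simp [Fin.prod_univ_five, Hmat, hg]

lemma Hmat_indexSwap (g1 g2 g3 g4 g5 : ℂ) (i j : Fin 5) :
    Hmat g1 g2 g3 g4 g5 (indexSwap i) (indexSwap j) = star (Hmat g1 g2 g3 g4 g5 i j) := by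
  fin_cases i <;> fin_cases j <;> simp [Hmat, indexSwap, mul_comm]

lemma eq_Hmat {A : Matrix (Fin 5) (Fin 5) ℂ} (hA : A.IsLowerTriangular)
    (hstar : ∀ i j, A (indexSwap i) (indexSwap j) = star (A i j))
    (hdiag0 : A 0 0 = A 2 2 * A 3 3) (hdiag2 : A 2 2 = A 3 3 * A 4 4) :
    A = Hmat (A 4 4) (A 4 2) (A 2 1) (A 3 1) (A 4 1) := by
  have hlt {i j : Fin 5} (hij : i < j) : A i j = 0 := hA hij
  have h10 : A 1 0 = 0 := (hstar 0 1).trans (by rw [hlt (by decide), star_zero])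
  have h43 : A 4 3 = 0 := (hstar 3 4).trans (by rw [hlt (by decide), star_zero])
  have h20 : A 2 0 = star (A 2 1) := hstar 2 1
  have h30 : A 3 0 = star (A 4 1) := hstar 4 1
  have h32 : A 3 2 = star (A 4 2) := hstar 4 2
  have h40 : A 4 0 = star (A 3 1) := hstar 3 1
  have h33 : A 3 3 = star (A 4 4) := hstar 4 4
  have h22 : A 2 2 = A 4 4 * star (A 4 4) := by rw [hdiag2, h33, mul_comm]
  have h00 : A 0 0 = A 4 4 * star (A 4 4) ^ 2 := by rw [hdiag0, h22, h33, sq, mul_assoc]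
  have h11 : A 1 1 = A 4 4 ^ 2 * star (A 4 4) := by
    rw [show A 1 1 = star (A 0 0) from hstar 0 0, h00, star_mul', star_pow, star_star, mul_comm]
  ext i j
  fin_cases i <;> fin_cases j <;> first | rfl | assumption | exact hlt (by decide)

lemma mem_Hset_iff {A : Matrix (Fin 5) (Fin 5) ℂ} :
    A ∈ Hset ↔ ∃ g ∈ structureGroup, g.1.val = A := by
  constructor
  · rintro ⟨g1, g2, g3, g4, g5, hg, rfl⟩
    refine ⟨⟨(isUnit_Hmat hg g2 g3 g4 g5).unit, Hmat_isLowerTriangular ..⟩, ?_, rfl⟩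
    refine mem_structureGroup_iff.mpr ⟨Hmat_indexSwap g1 g2 g3 g4 g5, ?_, ?_⟩
    · change g1 * star g1 ^ 2 = g1 * star g1 * star g1
      ring
    · exact mul_comm g1 (star g1)
  · rintro ⟨g, hg, rfl⟩
    obtain ⟨hstar, hdiag0, hdiag2⟩ := mem_structureGroup_iff.mp hg
    have h44 : g.1.val 4 4 ≠ 0 := ((Group.isUnit g).map (diagHom 4)).ne_zero
    exact ⟨_, _, _, _, _, h44, eq_Hmat g.2 hstar hdiag0 hdiag2⟩

/-- `H` is a subgroup of `GL(5, ℂ)`: its members are invertible, it contains the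
identity, and it is closed under products and inverses. -/
theorem Hset_is_subgroup :
    (∀ A ∈ Hset, IsUnit A) ∧
    (1 : Matrix (Fin 5) (Fin 5) ℂ) ∈ Hset ∧
    (∀ A ∈ Hset, ∀ B ∈ Hset, A * B ∈ Hset) ∧
    (∀ A ∈ Hset, A⁻¹ ∈ Hset) := by
  simp only [mem_Hset_iff]
  refine ⟨?_, ⟨1, one_mem _, rfl⟩, ?_, ?_⟩
  · rintro _ ⟨g, -, rfl⟩
    exact g.1.isUnit
  · rintro _ ⟨g, hg, rfl⟩ _ ⟨h, hh, rfl⟩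
    exact ⟨g * h, mul_mem hg hh, rfl⟩
  · rintro _ ⟨g, hg, rfl⟩
    exact ⟨g⁻¹, inv_mem hg, coe_units_inv g.1⟩
end

section
/- The set H_J of complex 5×5 matrices of the form with rows (g1·ḡ1², 0, 0, 0, 0), (0, g1²·ḡ1, 0, 0, 0), (0, 0, g1·ḡ1, 0, 0), (0, 0, g2, ḡ1, 0), (0, 0, ḡ2, 0, g1), where g1, g2 ∈ ℂ and g1 ≠ 0, is a subgroup of GL(5, ℂ) contained in the group H; that is, H_J ⊆ H, the identity matrix belongs to H_J, and H_J is closed under matrix multiplication and inversion. -/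
/-! A matrix in `H_J` is a diagonal matrix `χ(g1)` plus one extra column
`κ(g2) = (0, 0, 0, g2, ḡ2)`, where `χ` is multiplicative and `κ` is additive. Because `κ(g2)`
vanishes at the diagonal position of its column, two such matrices multiply by
`χ(a1) χ(b1) = χ(a1 b1)` on the diagonal and by `|b1|² κ(a2) + χ(a1) κ(b2)` in the column. The last
two entries of `χ(a1)` are `ā1` and `a1`, so this column is again of the form `κ(c)`, with
`c = |b1|² a2 + ā1 b2`. Solving this group law for the second factor gives the inverse. -/

open Matrix

/-- The matrix of the reduced structure group `H_J` on the branch `J ≡ 0`. -/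
def HJmat (g1 g2 : ℂ) : Matrix (Fin 5) (Fin 5) ℂ :=
  !![g1 * (star g1) ^ 2, 0, 0, 0, 0;
     0, g1 ^ 2 * star g1, 0, 0, 0;
     0, 0, g1 * star g1, 0, 0;
     0, 0, g2, star g1, 0;
     0, 0, star g2, 0, g1]

/-- The set `H_J ⊆ Matrix (Fin 5) (Fin 5) ℂ`. -/
def HJset : Set (Matrix (Fin 5) (Fin 5) ℂ) :=
  {A | ∃ g1 g2 : ℂ, g1 ≠ 0 ∧ A = HJmat g1 g2}

lemma diagonal_add_vecMulVec_single_mul {n R : Type*} [Fintype n] [DecidableEq n]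
    [CommSemiring R] (k : n) (d e v : n → R) {w : n → R} (hw : w k = 0) :
    (diagonal d + vecMulVec v (Pi.single k 1)) * (diagonal e + vecMulVec w (Pi.single k 1)) =
      diagonal (d * e) + vecMulVec (e k • v + d * w) (Pi.single k 1) := by
  have row_mul_diagonal : Pi.single k (1 : R) ᵥ* diagonal e = e k • Pi.single k (1 : R) := by
    rw [single_vecMul_diagonal, mul_comm, ← smul_eq_mul, Pi.single_smul]
  have diagonal_mul_col : diagonal d *ᵥ w = d * w := funext (mulVec_diagonal d w)
  have row_mul_col : Pi.single k (1 : R) ⬝ᵥ w = 0 := by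
    rw [single_one_dotProduct, hw]
  rw [add_mul, mul_add, mul_add, diagonal_mul_diagonal', mul_vecMulVec, diagonal_mul_col,
    vecMulVec_mul, row_mul_diagonal, vecMulVec_mul_vecMulVec, row_mul_col, zero_smul,
    vecMulVec_zero, add_zero, vecMulVec_smul, ← smul_vecMulVec, add_vecMulVec, add_assoc,
    add_comm (vecMulVec (d * w) _)]
  rfl

section Parameters

variable {R : Type*} [CommSemiring R] [StarRing R]

/-- The homomorphism `χ` sending the parameter `g1` to the diagonal of the corresponding element
of `H_J`. -/
def HJdiag : R →* (Fin 5 → R) where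
  toFun g1 := ![g1 * star g1 ^ 2, g1 ^ 2 * star g1, g1 * star g1, star g1, g1]
  map_one' := by
    ext i
    fin_cases i <;> simp
  map_mul' a b := by
    ext i
    fin_cases i <;> simp <;> ring

/-- The additive homomorphism `κ` sending the parameter `g2` to the off-diagonal part of column
`2` (counted from zero) of the corresponding element of `H_J`. -/
def HJcol : R →+ (Fin 5 → R) where
  toFun g2 := ![0, 0, 0, g2, star g2]
  map_zero' := by
    ext i
    fin_cases i <;> simp
  map_add' a b := by
    ext i
    fin_cases i <;> simp

lemma smul_HJcol_of_isSelfAdjoint {r : R} (hr : IsSelfAdjoint r) (g2 : R) :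
    r • HJcol g2 = HJcol (r * g2) := by
  ext i
  fin_cases i <;> simp [HJcol, hr.star_eq]

lemma HJdiag_mul_HJcol (g1 g2 : R) : HJdiag g1 * HJcol g2 = HJcol (star g1 * g2) := by
  ext i
  fin_cases i <;> simp [HJdiag, HJcol, mul_comm]

end Parameters

lemma HJmat_eq_diagonal_add_vecMulVec (g1 g2 : ℂ) :
    HJmat g1 g2 = diagonal (HJdiag g1) + vecMulVec (HJcol g2) (Pi.single 2 1) := by
  ext i j
  fin_cases i <;> fin_cases j <;>
    simp [HJmat, HJdiag, HJcol, vecMulVec_apply, -cons_vecMulVec]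

lemma HJmat_one_zero : HJmat 1 0 = 1 := by
  rw [HJmat_eq_diagonal_add_vecMulVec, map_one, map_zero, zero_vecMulVec, add_zero,
    diagonal_one']

lemma HJmat_mul_HJmat (a1 a2 b1 b2 : ℂ) :
    HJmat a1 a2 * HJmat b1 b2 = HJmat (a1 * b1) (b1 * star b1 * a2 + star a1 * b2) := by
  have column : HJdiag b1 2 • HJcol a2 + HJdiag a1 * HJcol b2 =
      HJcol (b1 * star b1 * a2 + star a1 * b2) := by
    rw [map_add, ← smul_HJcol_of_isSelfAdjoint (.mul_star_self b1), HJdiag_mul_HJcol]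
    rfl
  simp only [HJmat_eq_diagonal_add_vecMulVec]
  rw [diagonal_add_vecMulVec_single_mul 2 _ _ _ (w := HJcol b2) rfl, column, map_mul]

lemma inv_HJmat {g1 : ℂ} (hg1 : g1 ≠ 0) (g2 : ℂ) :
    (HJmat g1 g2)⁻¹ = HJmat g1⁻¹ (-g2 / (g1 * star g1 ^ 2)) := by
  have hg1_star : star g1 ≠ 0 := star_ne_zero.mpr hg1
  have column_cancels :
      g1⁻¹ * star g1⁻¹ * g2 + star g1 * (-g2 / (g1 * star g1 ^ 2)) = 0 := by
    rw [star_inv₀]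
    field_simp
    ring
  apply inv_eq_right_inv
  rw [HJmat_mul_HJmat, mul_inv_cancel₀ hg1, column_cancels, HJmat_one_zero]

lemma HJmat_eq_Hmat (g1 g2 : ℂ) : HJmat g1 g2 = Hmat g1 (star g2) 0 0 0 := by
  simp only [HJmat, Hmat, star_star, star_zero]

lemma HJset_subset_Hset : HJset ⊆ Hset := by
  rintro _ ⟨g1, g2, hg1, rfl⟩
  exact ⟨g1, star g2, 0, 0, 0, hg1, HJmat_eq_Hmat g1 g2⟩

lemma one_mem_HJset : 1 ∈ HJset :=
  ⟨1, 0, one_ne_zero, HJmat_one_zero.symm⟩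

lemma mul_mem_HJset {A B : Matrix (Fin 5) (Fin 5) ℂ} (hA : A ∈ HJset) (hB : B ∈ HJset) :
    A * B ∈ HJset := by
  obtain ⟨a1, a2, ha1, rfl⟩ := hA
  obtain ⟨b1, b2, hb1, rfl⟩ := hB
  exact ⟨_, _, mul_ne_zero ha1 hb1, HJmat_mul_HJmat a1 a2 b1 b2⟩

lemma inv_mem_HJset {A : Matrix (Fin 5) (Fin 5) ℂ} (hA : A ∈ HJset) : A⁻¹ ∈ HJset := by
  obtain ⟨g1, g2, hg1, rfl⟩ := hA
  exact ⟨_, _, inv_ne_zero hg1, inv_HJmat hg1 g2⟩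

/-- `H_J` is a subgroup of `GL(5, ℂ)` contained in `H`: `H_J ⊆ H`, it contains the
identity, and it is closed under products and inverses. -/
theorem HJset_is_subgroup_of_Hset :
    HJset ⊆ Hset ∧
    (1 : Matrix (Fin 5) (Fin 5) ℂ) ∈ HJset ∧
    (∀ A ∈ HJset, ∀ B ∈ HJset, A * B ∈ HJset) ∧
    (∀ A ∈ HJset, A⁻¹ ∈ HJset) :=
  ⟨HJset_subset_Hset, one_mem_HJset, fun _ hA _ hB => mul_mem_HJset hA hB,
    fun _ hA => inv_mem_HJset hA⟩
end
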